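/- Define β₀*(π, m, δ) := (1/2)·(g₁⁻¹(ρ*/(2(1−π)mδ)) − g₁⁻¹(ρ*/(2πmδ))), where ρ* = ρ*(π,m,δ) is the unique ρ ∈ (0,1) satisfying π·δ·g(ρ/(2πmδ)) + (1−π)·δ·g(ρ/(2(1−π)mδ)) = 1 − ρ². Then for all π ∈ (0,1/2), m > 0, δ > 0: β₀*(π,m,δ) < 0; moreover β₀* is strictly increasing in π on (0,1/2) (for fixed m, δ), strictly increasing in m on (0,∞) (for fixed π ∈ (0,1/2), δ), and strictly increasing in δ on (0,∞) (for fixed π ∈ (0,1/2), m). -/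

import Mathlib

open MeasureTheory

/-- The standard normal density. -/
noncomputable def normPDF (x : ℝ) : ℝ := Real.exp (-x ^ 2 / 2) / Real.sqrt (2 * Real.pi)

/-- The standard normal cumulative distribution function. -/
noncomputable def normCDF (x : ℝ) : ℝ := ∫ t in Set.Iic x, normPDF t

/-- `g₁(x) = x·Φ(x) + φ(x)`, equal to `E[(Z+x)₊]` for standard normal `Z`. -/
noncomputable def g1 (x : ℝ) : ℝ := x * normCDF x + normPDF x

/-- `g₂(x) = (x²+1)·Φ(x) + x·φ(x)`, equal to `E[(Z+x)₊²]` for standard normal `Z`. -/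
noncomputable def g2 (x : ℝ) : ℝ := (x ^ 2 + 1) * normCDF x + x * normPDF x

/-- The inverse of `g₁` (on its range `(0,∞)`). -/
noncomputable def g1inv : ℝ → ℝ := Function.invFun g1

/-- `g = g₂ ∘ g₁⁻¹`. -/
noncomputable def gfn (t : ℝ) : ℝ := g2 (g1inv t)

lemma pdf_pos (x : ℝ) : 0 < normPDF x := by
  unfold normPDF; positivity

lemma pdf_cont : Continuous normPDF := by
  unfold normPDF; fun_prop

lemma pdf_deriv (x : ℝ) : HasDerivAt normPDF (-x * normPDF x) x := by
  have h1 : HasDerivAt (fun y : ℝ => -y ^ 2 / 2) (-x) x := by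
    have := ((hasDerivAt_pow 2 x).neg).div_const 2
    exact this.congr_deriv (by norm_num; ring)
  have := (h1.exp).div_const (Real.sqrt (2 * Real.pi))
  refine this.congr_deriv ?_
  unfold normPDF
  ring

lemma pdf_integrable : Integrable normPDF := by
  have h := (integrable_exp_neg_mul_sq (b := (1/2 : ℝ)) (by norm_num)).div_const
    (Real.sqrt (2 * Real.pi))
  unfold normPDF
  convert h using 3
  ring_nf

lemma cdf_eq (x : ℝ) : normCDF x = normCDF 0 + ∫ t in (0:ℝ)..x, normPDF t := by
  unfold normCDF
  rw [← intervalIntegral.integral_Iic_sub_Iic pdf_integrable.integrableOn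
    pdf_integrable.integrableOn]
  ring

lemma cdf_deriv (x : ℝ) : HasDerivAt normCDF (normPDF x) x := by
  have h : normCDF = fun x => normCDF 0 + ∫ t in (0:ℝ)..x, normPDF t := funext cdf_eq
  rw [h]
  exact (pdf_cont.integral_hasStrictDerivAt 0 x).hasDerivAt.const_add _

lemma cdf_lim : Filter.Tendsto normCDF Filter.atBot (nhds 0) := by
  have h := intervalIntegral_tendsto_integral_Iic (0:ℝ) (f := normPDF)
    pdf_integrable.integrableOn Filter.tendsto_id
  have h2 : Filter.Tendsto (fun x => normCDF 0 - ∫ t in (id x)..(0:ℝ), normPDF t) Filter.atBot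
      (nhds (normCDF 0 - normCDF 0)) := h.const_sub _
  rw [sub_self] at h2
  refine h2.congr fun x => ?_
  rw [cdf_eq x, intervalIntegral.integral_symm x 0]
  simp [sub_eq_add_neg]

lemma pos_of_deriv {f f' : ℝ → ℝ} (hf : ∀ x, HasDerivAt f (f' x) x) (hp : ∀ x, 0 < f' x)
    (hl : Filter.Tendsto f Filter.atBot (nhds 0)) (x : ℝ) : 0 < f x := by
  have hm : StrictMono f := strictMono_of_hasDerivAt_pos hf hp
  have h1 : 0 ≤ f (x - 1) := by
    refine le_of_tendsto hl ?_
    filter_upwards [Filter.eventually_le_atBot (x - 1)] with y hy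
    exact hm.monotone hy
  have := hm (show x - 1 < x by linarith)
  linarith

lemma cdf_pos (x : ℝ) : 0 < normCDF x := pos_of_deriv cdf_deriv pdf_pos cdf_lim x

lemma sq_pdf_lim : Filter.Tendsto (fun x => x ^ 2 * normPDF x) Filter.atBot (nhds 0) := by
  have h := (Real.tendsto_pow_mul_exp_neg_atTop_nhds_zero 1)
  have h2 : Filter.Tendsto (fun x : ℝ => x ^ 2 / 2) Filter.atBot Filter.atTop := by
    apply Filter.Tendsto.atTop_div_const (by norm_num)
    have := (Filter.tendsto_pow_atTop (α := ℝ) (n := 2) (by norm_num)).comp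
      Filter.tendsto_neg_atBot_atTop
    refine this.congr fun x => ?_
    simp
  have h3 := ((h.comp h2).const_mul 2).div_const (Real.sqrt (2 * Real.pi))
  simp only [mul_zero, zero_div] at h3
  refine h3.congr fun x => ?_
  simp only [Function.comp, normPDF]
  rw [show -x ^ 2 / 2 = -(x ^ 2 / 2) by ring]
  ring

lemma pdf_lim : Filter.Tendsto normPDF Filter.atBot (nhds 0) := by
  refine squeeze_zero' (Filter.Eventually.of_forall fun x => (pdf_pos x).le) ?_ sq_pdf_lim
  filter_upwards [Filter.eventually_le_atBot (-1)] with x hx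
  have h1 : 1 ≤ x ^ 2 := by nlinarith
  exact le_mul_of_one_le_left (pdf_pos x).le h1

lemma cdf_le_pdf {x : ℝ} (hx : x ≤ -1) : normCDF x ≤ normPDF x := by
  have hm : MonotoneOn (fun x => normPDF x - normCDF x) (Set.Iic (-1)) := by
    have hd : ∀ x, HasDerivAt (fun x => normPDF x - normCDF x) (-x * normPDF x - normPDF x) x :=
      fun x => (pdf_deriv x).sub (cdf_deriv x)
    refine monotoneOn_of_deriv_nonneg (convex_Iic _)
      (fun x _ => (hd x).continuousAt.continuousWithinAt)
      (fun x _ => (hd x).differentiableAt.differentiableWithinAt) ?_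
    intro y hy
    rw [interior_Iic] at hy
    rw [(hd y).deriv]
    have : y < -1 := hy
    nlinarith [pdf_pos y]
  have hl := pdf_lim.sub cdf_lim
  rw [sub_zero] at hl
  have : 0 ≤ normPDF x - normCDF x := by
    refine le_of_tendsto hl ?_
    filter_upwards [Filter.eventually_le_atBot x] with y hy
    exact hm (Set.mem_Iic.2 (hy.trans hx)) (Set.mem_Iic.2 hx) hy
  linarith

lemma sq_cdf_lim : Filter.Tendsto (fun x => x ^ 2 * normCDF x) Filter.atBot (nhds 0) := by
  refine squeeze_zero' (Filter.Eventually.of_forall fun x => ?_) ?_ sq_pdf_lim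
  · have := cdf_pos x
    positivity
  filter_upwards [Filter.eventually_le_atBot (-1)] with x hx
  exact mul_le_mul_of_nonneg_left (cdf_le_pdf hx) (sq_nonneg x)

lemma lim_mul_of_sq {f : ℝ → ℝ} (hf : ∀ x, 0 < f x)
    (h : Filter.Tendsto (fun x => x ^ 2 * f x) Filter.atBot (nhds 0)) :
    Filter.Tendsto (fun x => x * f x) Filter.atBot (nhds 0) := by
  refine squeeze_zero_norm' ?_ h
  filter_upwards [Filter.eventually_le_atBot (-1)] with x hx
  rw [Real.norm_eq_abs, abs_mul, abs_of_nonpos (by linarith : x ≤ 0), abs_of_pos (hf x)]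
  nlinarith [mul_nonneg (mul_nonneg (by linarith : 0 ≤ -x) (by linarith : 0 ≤ -x - 1)) (hf x).le]

lemma g1_deriv (x : ℝ) : HasDerivAt g1 (normCDF x) x := by
  have h := ((hasDerivAt_id x).mul (cdf_deriv x)).add (pdf_deriv x)
  exact h.congr_deriv (by simp)

lemma g2_deriv (x : ℝ) : HasDerivAt g2 (2 * g1 x) x := by
  have h := ((((hasDerivAt_pow 2 x).add_const 1)).mul (cdf_deriv x)).add
    ((hasDerivAt_id x).mul (pdf_deriv x))
  refine h.congr_deriv ?_
  simp [g1]
  ring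

lemma g1_lim : Filter.Tendsto g1 Filter.atBot (nhds 0) := by
  have := (lim_mul_of_sq cdf_pos sq_cdf_lim).add pdf_lim
  rw [add_zero] at this
  exact this

lemma g2_lim : Filter.Tendsto g2 Filter.atBot (nhds 0) := by
  have := (sq_cdf_lim.add cdf_lim).add (lim_mul_of_sq pdf_pos sq_pdf_lim)
  simp only [add_zero] at this
  refine this.congr fun x => ?_
  unfold g2; ring

lemma g1_pos (x : ℝ) : 0 < g1 x := pos_of_deriv g1_deriv cdf_pos g1_lim x

lemma g2_pos (x : ℝ) : 0 < g2 x :=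
  pos_of_deriv g2_deriv (fun x => by linarith [g1_pos x]) g2_lim x

lemma g1_mono : StrictMono g1 := strictMono_of_hasDerivAt_pos g1_deriv cdf_pos

lemma g2_mono : StrictMono g2 :=
  strictMono_of_hasDerivAt_pos g2_deriv (fun x => by linarith [g1_pos x])

lemma key1 (x : ℝ) : 0 < normCDF x ^ 2 - g1 x * normPDF x := by
  refine pos_of_deriv (f := fun x => normCDF x ^ 2 - g1 x * normPDF x)
    (f' := fun x => normPDF x * g2 x) (fun x => ?_)
    (fun x => mul_pos (pdf_pos x) (g2_pos x)) ?_ x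
  · refine (((cdf_deriv x).pow 2).sub ((g1_deriv x).mul (pdf_deriv x))).congr_deriv ?_
    simp [g2, g1]
    ring
  · simpa using (cdf_lim.pow 2).sub (g1_lim.mul pdf_lim)

lemma ratio_mono : StrictMono (fun x => g1 x / normCDF x) := by
  refine strictMono_of_hasDerivAt_pos
    (fun x => (g1_deriv x).div (cdf_deriv x) (cdf_pos x).ne') fun x => ?_
  have := key1 x
  have := cdf_pos x
  apply div_pos <;> nlinarith

lemma key2 (x : ℝ) : g2 x * normCDF x < 2 * g1 x ^ 2 := by
  have h : 0 < 2 * (g1 x * (g1 x / normCDF x)) - g2 x := by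
    refine pos_of_deriv (f := fun x => 2 * (g1 x * (g1 x / normCDF x)) - g2 x)
      (f' := fun x => 2 * g1 x * (normCDF x ^ 2 - g1 x * normPDF x) / normCDF x ^ 2)
      (fun x => ?_) (fun x => ?_) ?_ x
    · have hx := (cdf_pos x).ne'
      refine ((((g1_deriv x).mul ((g1_deriv x).div (cdf_deriv x) hx)).const_mul 2).sub
        (g2_deriv x)).congr_deriv ?_
      simp
      field_simp
      ring
    · have := key1 x
      have := cdf_pos x
      have := g1_pos x
      positivity
    · have h0 : Filter.Tendsto (fun x => g1 x * (g1 x / normCDF x)) Filter.atBot (nhds 0) := by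
        have hc := g1_lim.mul_const (g1 0 / normCDF 0)
        rw [zero_mul] at hc
        refine squeeze_zero' (Filter.Eventually.of_forall fun x => ?_) ?_ hc
        · have := cdf_pos x
          have := g1_pos x
          positivity
        · filter_upwards [Filter.eventually_le_atBot 0] with y hy
          exact mul_le_mul_of_nonneg_left (ratio_mono.monotone hy) (g1_pos y).le
      simpa using (h0.const_mul 2).sub g2_lim
  have hx := cdf_pos x
  have h2 := mul_pos h hx
  have h3 : (2 * (g1 x * (g1 x / normCDF x)) - g2 x) * normCDF x
      = 2 * g1 x ^ 2 - g2 x * normCDF x := by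
    field_simp
  linarith

lemma g1_g1inv {t : ℝ} (ht : 0 < t) : g1 (g1inv t) = t := by
  apply Function.invFun_eq
  obtain ⟨a, ha⟩ := ((g1_lim.eventually (gt_mem_nhds ht))).exists
  have h0 := cdf_pos 0
  have hb : t ≤ g1 (t / normCDF 0) := by
    have hx : 0 ≤ t / normCDF 0 := by positivity
    have hm : normCDF 0 ≤ normCDF (t / normCDF 0) :=
      (strictMono_of_hasDerivAt_pos cdf_deriv pdf_pos).monotone hx
    have h1 : t / normCDF 0 * normCDF 0 ≤ t / normCDF 0 * normCDF (t / normCDF 0) :=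
      mul_le_mul_of_nonneg_left hm hx
    rw [div_mul_cancel₀ _ h0.ne'] at h1
    have := pdf_pos (t / normCDF 0)
    unfold g1
    linarith
  have hc : Continuous g1 := continuous_iff_continuousAt.2 fun x => (g1_deriv x).continuousAt
  exact mem_range_of_exists_le_of_exists_ge hc ⟨a, ha.le⟩ ⟨_, hb⟩

/-- the shifted ratio of `g1` decreases -/
lemma shift_anti {d : ℝ} (hd : 0 < d) : StrictMono (fun x => g1 (x - d) / g1 x) := by
  have h1 : ∀ x, HasDerivAt (fun x => g1 (x - d)) (normCDF (x - d)) x := fun x =>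
    (g1_deriv (x - d)).comp_sub_const x d
  refine strictMono_of_hasDerivAt_pos
    (fun x => (h1 x).div (g1_deriv x) (g1_pos x).ne') fun x => ?_
  have h := ratio_mono (show x - d < x by linarith)
  simp only at h
  rw [div_lt_div_iff₀ (cdf_pos _) (cdf_pos _)] at h
  have := g1_pos x
  apply div_pos <;> nlinarith

lemma mean_mono {c b : ℝ} (hc : 0 < c) (hb : 0 < b) :
    StrictMono (fun x => (g2 x - c) / (g1 x + b)) := by
  refine strictMono_of_hasDerivAt_pos
    (fun x => ((g2_deriv x).sub_const c).div ((g1_deriv x).add_const b)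
      (add_pos (g1_pos x) hb).ne') fun x => ?_
  have := key2 x
  have h1 := g1_pos x
  have h2 := cdf_pos x
  have h3 := mul_pos h1 hb
  have h4 := mul_pos hc h2
  apply div_pos <;> nlinarith

/-- the constraint function -/
noncomputable def FF (m δ u v : ℝ) : ℝ :=
  δ * (g2 v + g1 v * ((g2 u - g2 v) / (g1 u + g1 v))) +
    (2 * m * δ * (g1 u * g1 v / (g1 u + g1 v))) ^ 2

lemma FF_symm (m δ u v : ℝ) : FF m δ u v = FF m δ v u := by
  unfold FF
  have h1 := g1_pos u
  have h2 := g1_pos v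
  have h3 : g1 u + g1 v ≠ 0 := by positivity
  have h4 : g1 v + g1 u ≠ 0 := by positivity
  have e : g2 v + g1 v * ((g2 u - g2 v) / (g1 u + g1 v)) =
      g2 u + g1 u * ((g2 v - g2 u) / (g1 v + g1 u)) := by
    rw [add_comm (g1 v) (g1 u)]
    field_simp
    ring
  rw [e, mul_comm (g1 u) (g1 v), add_comm (g1 u) (g1 v)]

lemma FF_mono {m δ : ℝ} (hm : 0 < m) (hδ : 0 < δ) (v : ℝ) :
    StrictMono (fun u => FF m δ u v) := by
  intro x y hxy
  have h1 := mean_mono (g2_pos v) (g1_pos v) hxy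
  simp only at h1
  have hx := g1_pos x
  have hy := g1_pos y
  have hv := g1_pos v
  have hg := g1_mono hxy
  have h2 : g1 x * g1 v / (g1 x + g1 v) ≤ g1 y * g1 v / (g1 y + g1 v) := by
    rw [div_le_div_iff₀ (by positivity) (by positivity)]
    nlinarith [mul_pos hv hv]
  unfold FF
  refine add_lt_add_of_lt_of_le ?_ ?_
  · gcongr
  · gcongr

lemma FF_mono2 {m δ : ℝ} (hm : 0 < m) (hδ : 0 < δ) (u : ℝ) :
    StrictMono (fun v => FF m δ u v) := by
  have := FF_mono hm hδ u
  intro x y hxy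
  simp only [FF_symm m δ u]
  exact this hxy

/-- The limiting intercept `β₀*(π, m, δ)` of the unrebalanced
max-margin classifier is negative and strictly increasing in each of `π`
(on `(0,1/2)`), `m`, and `δ`. -/
theorem stmt_13 (ρstar : ℝ → ℝ → ℝ → ℝ)
    (hρstar : ∀ p m δ : ℝ, p ∈ Set.Ioo (0 : ℝ) 1 → 0 < m → 0 < δ →
      ρstar p m δ ∈ Set.Ioo (0 : ℝ) 1 ∧
      p * δ * gfn (ρstar p m δ / (2 * p * m * δ)) +
          (1 - p) * δ * gfn (ρstar p m δ / (2 * (1 - p) * m * δ)) =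
        1 - (ρstar p m δ) ^ 2)
    (β0star : ℝ → ℝ → ℝ → ℝ)
    (hβ0star : ∀ p m δ : ℝ, β0star p m δ =
      (1 / 2) * (g1inv (ρstar p m δ / (2 * (1 - p) * m * δ)) -
        g1inv (ρstar p m δ / (2 * p * m * δ)))) :
    (∀ p m δ : ℝ, p ∈ Set.Ioo (0 : ℝ) (1 / 2) → 0 < m → 0 < δ → β0star p m δ < 0) ∧
    (∀ m δ : ℝ, 0 < m → 0 < δ →
      StrictMonoOn (fun p => β0star p m δ) (Set.Ioo 0 (1 / 2))) ∧
    (∀ p δ : ℝ, p ∈ Set.Ioo (0 : ℝ) (1 / 2) → 0 < δ →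
      StrictMonoOn (fun m => β0star p m δ) (Set.Ioi 0)) ∧
    (∀ p m : ℝ, p ∈ Set.Ioo (0 : ℝ) (1 / 2) → 0 < m →
      StrictMonoOn (fun δ => β0star p m δ) (Set.Ioi 0)) := by
  -- basic data
  have key : ∀ p m δ : ℝ, p ∈ Set.Ioo (0 : ℝ) (1 / 2) → 0 < m → 0 < δ →
      ∃ u v : ℝ, β0star p m δ = (1 / 2) * (v - u) ∧ v < u ∧ p * g1 u = (1 - p) * g1 v ∧
        p * δ * g2 u + (1 - p) * δ * g2 v + (2 * m * δ * (p * g1 u)) ^ 2 = 1 ∧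
        FF m δ u v = 1 := by
    intro p m δ hp hm hδ
    obtain ⟨hp0, hp1⟩ := hp
    obtain ⟨⟨hr0, hr1⟩, he⟩ := hρstar p m δ ⟨hp0, by linarith⟩ hm hδ
    have hq : 0 < 1 - p := by linarith
    set r := ρstar p m δ with hr
    have hA : 0 < r / (2 * p * m * δ) := by positivity
    have hB : 0 < r / (2 * (1 - p) * m * δ) := by positivity
    have eA := g1_g1inv hA
    have eB := g1_g1inv hB
    have hb := hβ0star p m δ
    rw [← hr] at hb
    unfold gfn at he
    set u := g1inv (r / (2 * p * m * δ)) with hu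
    set v := g1inv (r / (2 * (1 - p) * m * δ)) with hv
    have e1 : 2 * m * δ * (p * g1 u) = r := by rw [eA]; field_simp
    have e2 : 2 * m * δ * ((1 - p) * g1 v) = r := by rw [eB]; field_simp
    have hAp := g1_pos u
    have hBp := g1_pos v
    have e3 : p * g1 u = (1 - p) * g1 v := by
      have : (0:ℝ) < 2 * m * δ := by positivity
      exact mul_left_cancel₀ this.ne' (e1.trans e2.symm)
    have e4 : p * δ * g2 u + (1 - p) * δ * g2 v + (2 * m * δ * (p * g1 u)) ^ 2 = 1 := by
      rw [e1]; linarith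
    refine ⟨u, v, hb, ?_, e3, e4, ?_⟩
    · apply g1_mono.lt_iff_lt.1
      nlinarith
    · have hp' : p = g1 v / (g1 u + g1 v) := by
        rw [eq_div_iff (by positivity)]; linarith
      rw [← e4]
      unfold FF
      have e5 : g1 u * g1 v / (g1 u + g1 v) = p * g1 u := by rw [hp']; ring
      have e6 : g1 v * ((g2 u - g2 v) / (g1 u + g1 v)) = p * (g2 u - g2 v) := by
        rw [hp']; ring
      rw [e5, e6]; ring
  have mono : ∀ p m δ m' δ' : ℝ, p ∈ Set.Ioo (0 : ℝ) (1 / 2) → 0 < m → 0 < δ → m ≤ m' → δ ≤ δ' →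
      m * δ < m' * δ' → β0star p m δ < β0star p m' δ' := by
    intro p m δ m' δ' hp hm hδ hmm hdd hlt
    obtain ⟨u, v, hb, huv, e3, e4, -⟩ := key p m δ hp hm hδ
    obtain ⟨u', v', hb', huv', e3', e4', -⟩ := key p m' δ' hp (by linarith) (by linarith)
    obtain ⟨hp0, hp1⟩ := hp
    have hq : 0 < 1 - p := by linarith
    have hA := g1_pos u
    have hB := g1_pos v
    have hA' := g1_pos u'
    have hB' := g1_pos v'
    have hlt' : u' < u := by
      by_contra! hle
      have h1 : g1 u ≤ g1 u' := g1_mono.monotone hle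
      have h2 : v ≤ v' := by
        apply g1_mono.le_iff_le.1
        have : (1 - p) * g1 v ≤ (1 - p) * g1 v' := by
          rw [← e3, ← e3']; gcongr
        exact le_of_mul_le_mul_left this hq
      have h3 := g2_mono.monotone hle
      have h4 := g2_mono.monotone h2
      have := g2_pos u
      have := g2_pos v
      have hδ' : 0 < δ' := by linarith
      have k1 : p * δ * g2 u ≤ p * δ' * g2 u' := by gcongr
      have k2 : (1 - p) * δ * g2 v ≤ (1 - p) * δ' * g2 v' := by gcongr
      have k3 : (2 * m * δ * (p * g1 u)) ^ 2 < (2 * m' * δ' * (p * g1 u')) ^ 2 := by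
        have : 2 * m * δ * (p * g1 u) < 2 * m' * δ' * (p * g1 u') := by
          have a1 : 2 * m * δ * (p * g1 u) < 2 * m' * δ' * (p * g1 u) := by
            apply mul_lt_mul_of_pos_right _ (by positivity)
            linarith
          have a2 : 2 * m' * δ' * (p * g1 u) ≤ 2 * m' * δ' * (p * g1 u') := by
            have : 0 < m' := by linarith
            have : 0 < δ' := by linarith
            gcongr
          linarith
        have h0 : 0 ≤ 2 * m * δ * (p * g1 u) := by positivity
        gcongr
      linarith
    rw [hb, hb']
    by_contra! hcon
    have hd : u - v ≤ u' - v' := by linarith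
    have s := shift_anti (show 0 < u - v by linarith) hlt'
    simp only [sub_sub_cancel] at s
    have s2 : g1 v' ≤ g1 (u' - (u - v)) := g1_mono.monotone (by linarith)
    have r1 : g1 v / g1 u = p / (1 - p) := by
      rw [div_eq_div_iff hA.ne' hq.ne']; linarith
    have r2 : g1 v' / g1 u' = p / (1 - p) := by
      rw [div_eq_div_iff hA'.ne' hq.ne']; linarith
    have s3 : g1 v' / g1 u' ≤ g1 (u' - (u - v)) / g1 u' := by gcongr
    linarith
  refine ⟨?_, ?_, ?_, ?_⟩
  · intro p m δ hp hm hδ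
    obtain ⟨u, v, hb, huv, -⟩ := key p m δ hp hm hδ
    rw [hb]; linarith
  · intro m δ hm hδ p hp p' hp' hpp
    obtain ⟨u, v, hb, huv, e3, -, hF⟩ := key p m δ hp hm hδ
    obtain ⟨u', v', hb', huv', e3', -, hF'⟩ := key p' m δ hp' hm hδ
    obtain ⟨hp0, hp1⟩ := hp
    obtain ⟨hp0', hp1'⟩ := hp'
    have hA := g1_pos u
    have hB := g1_pos v
    have hA' := g1_pos u'
    have hB' := g1_pos v'
    simp only [hb, hb']
    have hu : u' < u := by
      by_contra! hle
      have hv : v' ≤ v := by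
        by_contra! hlt
        have k1 := (FF_mono hm hδ v).monotone hle
        have k2 := FF_mono2 hm hδ u' hlt
        simp only at k1 k2
        linarith
      have h1 : g1 u ≤ g1 u' := g1_mono.monotone hle
      have h2 : g1 v' ≤ g1 v := g1_mono.monotone hv
      have k1 : (1 - p) * g1 v ≤ p * g1 u' := by rw [← e3]; gcongr
      have k2 : p * g1 u' < p' * g1 u' := by gcongr
      have k3 : p' * g1 u' ≤ (1 - p') * g1 v := by
        rw [e3']
        exact mul_le_mul_of_nonneg_left h2 (by linarith)
      nlinarith
    have hv : v ≤ v' := by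
      by_contra! hlt
      have k1 := FF_mono hm hδ v' hu
      have k2 := FF_mono2 hm hδ u hlt
      simp only at k1 k2
      linarith
    linarith
  · intro p δ hp hδ m hm m' hm' hmm
    have hm : 0 < m := hm
    exact mono p m δ m' δ hp hm hδ hmm.le le_rfl (by gcongr)
  · intro p m hp hm δ hδ δ' hδ' hdd
    have hδ : 0 < δ := hδ
    exact mono p m δ m δ' hp hm hδ le_rfl hdd.le (by gcongr)
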